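/- Let φ : R → R be a contracting endomorphism of a local ring (R, m, k) whose induced endomorphism of the residue field k is separable, and such that R/φ(m)R is Artinian. Then there exists a commutative square consisting of a weakly étale local homomorphism β̃ : (R, m, k) → (S, mS, K) with S complete and k → K separable, and a module-finite contracting endomorphism ψ : S → S satisfying ψ ∘ β̃ = β̃ ∘ φ. -/

import Mathlib

open IsLocalRing

/-- A local homomorphism of local rings is *weakly étale* if it is flat and its closed fibre
is a field, i.e. the maximal ideal of the source extends to the maximal ideal of the target. -/
def RingHom.WeaklyEtale {R S : Type u} [CommRing R] [CommRing S]
    [IsLocalRing R] [IsLocalRing S] (f : R →+* S) : Prop :=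
  (letI : Algebra R S := f.toAlgebra; Module.Flat R S) ∧ IsLocalHom f ∧
    Ideal.map f (maximalIdeal R) = maximalIdeal S

/-- A field homomorphism `β : k → K` is *separable* if every intermediate field that is
finitely generated over `k` is separably generated over `k`. -/
def RingHom.IsSeparableFieldHom {k K : Type u} [Field k] [Field K] (β : k →+* K) : Prop :=
  letI : Algebra k K := β.toAlgebra
  ∀ F : IntermediateField k K, F.FG →
    ∃ s : Set F, AlgebraicIndependent k ((↑) : s → F) ∧
      Algebra.IsSeparable (↥(IntermediateField.adjoin k (s : Set (↥F)))) (↥F)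

/-- The data of a commutative square as in Proposition A.4: a weakly étale local map
`β̃ : (R,m,k) → (S,mS,K)` with `S` complete and `k → K` separable, together with a
module-finite contracting endomorphism `ψ` of `S` satisfying `ψ ∘ β̃ = β̃ ∘ φ`. -/
structure CowsCompletion (R : Type u) [CommRing R] [IsNoetherianRing R] [IsLocalRing R]
    (φ : R →+* R) where
  S : Type u
  [commRingS : CommRing S]
  [noethS : IsNoetherianRing S]
  [localS : IsLocalRing S]
  β : R →+* S
  ψ : S →+* S
  [localβ : IsLocalHom β]
  weaklyEtale : β.WeaklyEtale
  complete : IsAdicComplete (maximalIdeal S) S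
  residueSeparable : (ResidueField.map β).IsSeparableFieldHom
  square_comm : ψ.comp β = β.comp φ
  moduleFinite : ψ.Finite
  contracting : ∃ N : ℕ, ∀ n : ℕ, N ≤ n → ∀ x ∈ maximalIdeal S,
    (ψ ^ n) x ∈ (maximalIdeal S) ^ 2

section
/-- MacLane's criterion, in the form of linear disjointness. -/
def MacLaneHom {k K : Type*} [Field k] [Field K] (f : k →+* K) : Prop :=
  ∀ p : ℕ, p.Prime → CharP k p → ∀ (n : ℕ) (c : Fin n → k) (x : Fin n → K), x ≠ 0 →
    ∑ i, x i ^ p * f (c i) = 0 → ∃ y : Fin n → k, y ≠ 0 ∧ ∑ i, y i ^ p * c i = 0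

lemma MacLaneHom.comp {k K L : Type*} [Field k] [Field K] [Field L] {f : k →+* K} {g : K →+* L}
    (hf : MacLaneHom f) (hg : MacLaneHom g) : MacLaneHom (g.comp f) := by
  intro p hp hc n c x hx h
  have : CharP K p := charP_of_injective_ringHom f.injective p
  obtain ⟨y, hy, hy'⟩ := hg p hp this n (fun i => f (c i)) x hx h
  exact hf p hp hc n c y hy hy'

lemma MacLaneHom.of_comp {k K L : Type*} [Field k] [Field K] [Field L] {f : k →+* K} {g : K →+* L}
    (h : MacLaneHom (g.comp f)) : MacLaneHom f := by
  intro p hp hc n c x hx h'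
  refine h p hp hc n c (fun i => g (x i)) ?_ ?_
  · intro h0
    apply hx
    ext i
    have := congrFun h0 i
    simpa using this
  · have := congrArg g h'
    simpa using this

lemma MacLaneHom.of_bijective {k K : Type*} [Field k] [Field K] {f : k →+* K}
    (hf : Function.Bijective f) : MacLaneHom f := by
  intro p hp hc n c x hx h
  choose y hy using fun i => hf.2 (x i)
  refine ⟨y, ?_, ?_⟩
  · rintro rfl
    apply hx
    ext i
    simp [← hy i]
  · apply hf.1
    simp [hy, h]

lemma macLane_of_linearIndependent {k K : Type*} [Field k] [Field K] [Algebra k K]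
    (H : ∀ p : ℕ, p.Prime → CharP k p → ∀ (m : ℕ) (v : Fin m → K), LinearIndependent k v →
      LinearIndependent k (fun i => v i ^ p)) : MacLaneHom (algebraMap k K) := by
  intro p hp hc n c x hx h
  let W := Submodule.span k (Set.range x)
  have : CharP K p := charP_of_injective_algebraMap (algebraMap k K).injective p
  have := Fact.mk hp
  have : FiniteDimensional k W := FiniteDimensional.span_of_finite k (Set.finite_range x)
  let b := Module.finBasis k W
  let xw : Fin n → W := fun i => ⟨x i, Submodule.subset_span ⟨i, rfl⟩⟩
  have hlin := H p hp hc _ (fun j => (b j : K)) (b.linearIndependent.map' W.subtype (by simp))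
  have hx' : ∀ i, x i = ∑ j, b.repr (xw i) j • (b j : K) := by
    intro i
    have := congrArg W.subtype (b.sum_repr (xw i))
    simp only [map_sum, map_smul] at this
    exact this.symm
  have key : ∀ j, ∑ i, (b.repr (xw i) j) ^ p * c i = 0 := by
    rw [Fintype.linearIndependent_iff] at hlin
    apply hlin (fun j => ∑ i, (b.repr (xw i) j) ^ p * c i)
    rw [← h]
    simp_rw [Finset.sum_smul]
    rw [Finset.sum_comm]
    refine Finset.sum_congr rfl fun i _ => ?_
    conv_rhs => rw [hx' i, sum_pow_char]
    rw [Finset.sum_mul]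
    refine Finset.sum_congr rfl fun j _ => ?_
    simp only [Algebra.smul_def, map_mul, map_pow, mul_pow]
    ring
  obtain ⟨i, hi⟩ := Function.ne_iff.mp hx
  have : ∃ j, b.repr (xw i) j ≠ 0 := by
    by_contra! hcon
    apply hi
    rw [hx' i]
    simp [hcon]
  obtain ⟨j, hj⟩ := this
  exact ⟨fun i => b.repr (xw i) j, Function.ne_iff.mpr ⟨i, hj⟩, key j⟩

lemma MacLaneHom.linearIndependent {k K : Type*} [Field k] [Field K] [Algebra k K]
    (H : MacLaneHom (algebraMap k K)) (p : ℕ) (hp : p.Prime) (hc : CharP k p)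
    {m : ℕ} (v : Fin m → K) (hv : LinearIndependent k v) :
    LinearIndependent k (fun i => v i ^ p) := by
  have : CharP K p := charP_of_injective_algebraMap (algebraMap k K).injective p
  have := Fact.mk hp
  rw [Fintype.linearIndependent_iff]
  intro c h
  let k₀ := (frobenius k p).fieldRange
  let W := Submodule.span k₀ (Set.range c)
  have : FiniteDimensional k₀ W := FiniteDimensional.span_of_finite k₀ (Set.finite_range c)
  let b := Module.finBasis k₀ W
  let cw : Fin m → W := fun i => ⟨c i, Submodule.subset_span ⟨i, rfl⟩⟩
  have hr : ∀ a : k₀, ∃ y : k, y ^ p = a := fun a => by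
    obtain ⟨y, hy⟩ := a.2
    exact ⟨y, by simpa [frobenius_def] using hy⟩
  choose rt hrt using hr
  let y : Fin m → Fin _ → k := fun i j => rt (b.repr (cw i) j)
  have hc' : ∀ i, c i = ∑ j, y i j ^ p * (b j : k) := by
    intro i
    have := congrArg W.subtype (b.sum_repr (cw i))
    simp only [map_sum, map_smul] at this
    rw [show c i = W.subtype (cw i) from rfl, ← this]
    refine Finset.sum_congr rfl fun j _ => ?_
    simp only [y, hrt]
    rfl
  have hz : (fun j => ∑ i, algebraMap k K (y i j) * v i) = 0 := by
    by_contra hne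
    obtain ⟨w, hw, hw'⟩ := H p hp hc _ (fun j => (b j : k)) _ hne (by
      rw [← h]
      simp_rw [sum_pow_char, Finset.sum_mul]
      rw [Finset.sum_comm]
      refine Finset.sum_congr rfl fun i _ => ?_
      rw [hc' i, Finset.sum_smul]
      refine Finset.sum_congr rfl fun j _ => ?_
      simp only [Algebra.smul_def, map_mul, map_pow, mul_pow]
      ring)
    have hlin : LinearIndependent k₀ (fun j => (b j : k)) :=
      b.linearIndependent.map' W.subtype (by simp)
    rw [Fintype.linearIndependent_iff] at hlin
    apply hw
    ext j
    have := hlin (fun j => ⟨w j ^ p, w j, rfl⟩) (by simpa [Subfield.smul_def] using hw') j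
    have := congrArg Subtype.val this
    simpa [hp.ne_zero] using this
  rw [Fintype.linearIndependent_iff] at hv
  intro i
  rw [hc' i]
  refine Finset.sum_eq_zero fun j _ => ?_
  have := hv (fun i => y i j) (by simpa [Algebra.smul_def] using congrFun hz j) i
  simp [this, hp.ne_zero]

lemma macLane_of_isSeparable {k K : Type*} [Field k] [Field K] [Algebra k K]
    [Algebra.IsSeparable k K] : MacLaneHom (algebraMap k K) := by
  apply macLane_of_linearIndependent
  intro p hp hc m v hv
  have : ExpChar k p := .prime hp
  simpa using hv.map_pow_expChar_pow_of_isSeparable p 1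

lemma macLane_mvPolynomial {k : Type*} [Field k] {ι : Type*} (p : ℕ) (hp : p.Prime)
    (hc : CharP k p) (n : ℕ) (c : Fin n → k) (x : Fin n → MvPolynomial ι k) (hx : x ≠ 0)
    (h : ∑ i, x i ^ p * MvPolynomial.C (c i) = 0) :
    ∃ y : Fin n → k, y ≠ 0 ∧ ∑ i, y i ^ p * c i = 0 := by
  have := Fact.mk hp
  obtain ⟨i, hi⟩ := Function.ne_iff.mp hx
  obtain ⟨d, hd⟩ := MvPolynomial.ne_zero_iff.mp hi
  refine ⟨fun i => (x i).coeff d, Function.ne_iff.mpr ⟨i, hd⟩, ?_⟩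
  have := congrArg (MvPolynomial.coeff (p • d)) h
  rw [MvPolynomial.coeff_sum] at this
  simp only [mul_comm _ (MvPolynomial.C _), MvPolynomial.coeff_C_mul, MvPolynomial.coeff_zero] at this
  rw [← this]
  refine Finset.sum_congr rfl fun i _ => ?_
  rw [← MvPolynomial.map_frobenius_expand, MvPolynomial.coeff_map,
    MvPolynomial.coeff_expand_smul _ hp.ne_zero, frobenius_def, mul_comm]

lemma macLane_of_isFractionRing {k B L ι : Type*} [Field k] [CommRing B] [IsDomain B] [Field L]
    [Algebra k B] [Algebra k L] [Algebra B L] [IsScalarTower k B L] [IsFractionRing B L]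
    (e : MvPolynomial ι k ≃ₐ[k] B) : MacLaneHom (algebraMap k L) := by
  intro p hp hc n c x hx h
  obtain ⟨d, hd⟩ := IsLocalization.exist_integer_multiples_of_finite (nonZeroDivisors B) x
  choose z hz using hd
  have hinj : Function.Injective (algebraMap B L) := IsFractionRing.injective _ _
  have hd0 : algebraMap B L d ≠ 0 := by
    intro h0
    exact nonZeroDivisors.ne_zero d.2 (hinj (by simpa using h0))
  refine macLane_mvPolynomial p hp hc n c (fun i => e.symm (z i)) ?_ ?_
  · obtain ⟨i, hi⟩ := Function.ne_iff.mp hx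
    refine Function.ne_iff.mpr ⟨i, ?_⟩
    intro h0
    have h2 : z i = 0 := by simpa using h0
    have h1 := hz i
    rw [h2, map_zero, Algebra.smul_def] at h1
    rcases mul_eq_zero.mp h1.symm with h3 | h3
    · exact hd0 h3
    · exact hi h3
  · apply e.injective
    apply hinj
    simp only [map_sum, map_mul, map_pow, AlgEquiv.apply_symm_apply, hz, map_zero]
    have : ∀ a : k, algebraMap B L (e (MvPolynomial.C a)) = algebraMap k _ a := by
      intro a
      rw [← MvPolynomial.algebraMap_eq, e.commutes, ← IsScalarTower.algebraMap_apply]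
    simp only [this]
    have h2 := congrArg (fun t => (algebraMap B L d) ^ p * t) h
    simp only [Finset.mul_sum, mul_zero] at h2
    rw [← h2]
    refine Finset.sum_congr rfl fun i _ => ?_
    rw [Algebra.smul_def]
    ring

open scoped IntermediateField.algebraAdjoinAdjoin in
lemma macLane_of_algebraicIndependent {k F : Type*} [Field k] [Field F] [Algebra k F]
    (s : Set F) (hs : AlgebraicIndependent k ((↑) : s → F)) :
    MacLaneHom (algebraMap k (IntermediateField.adjoin k s)) := by
  have e := hs.aevalEquiv
  rw [Subtype.range_coe] at e
  exact macLane_of_isFractionRing (B := Algebra.adjoin k s) e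


lemma RingHom.IsSeparableFieldHom.macLane {k K : Type u} [Field k] [Field K] {β : k →+* K}
    (h : β.IsSeparableFieldHom) : MacLaneHom β := by
  let : Algebra k K := β.toAlgebra
  intro p hp hc n c x hx hsum
  let F := IntermediateField.adjoin k (Set.range x)
  obtain ⟨s, hs, hs'⟩ := h F (IntermediateField.fg_adjoin_of_finite (Set.finite_range x))
  have h1 := macLane_of_algebraicIndependent s hs
  have h2 := macLane_of_isSeparable (k := IntermediateField.adjoin k s) (K := F)
  have h3 := h1.comp h2
  refine h3 p hp hc n c (fun i => ⟨x i, IntermediateField.subset_adjoin _ _ ⟨i, rfl⟩⟩) ?_ ?_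
  · obtain ⟨i, hi⟩ := Function.ne_iff.mp hx
    refine Function.ne_iff.mpr ⟨i, ?_⟩
    intro h0
    exact hi (congrArg Subtype.val h0)
  · apply Subtype.ext
    simp only [ZeroMemClass.coe_zero, ← hsum]
    rw [AddSubmonoidClass.coe_finsetSum]
    rfl

lemma MacLaneHom.isSeparableFieldHom {k K : Type u} [Field k] [Field K] {β : k →+* K}
    (h : MacLaneHom β) : β.IsSeparableFieldHom := by
  let : Algebra k K := β.toAlgebra
  intro F hF
  have : Algebra.EssFiniteType k F := IntermediateField.essFiniteType_iff.mpr hF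
  obtain hz | ⟨p, hp, hpk⟩ := CharP.exists' k
  · obtain ⟨s, hs, hs'⟩ := exists_isTranscendenceBasis_and_isSeparable_of_perfectField k F
    exact ⟨s, hs.1, hs'⟩
  · have : ExpChar k p := .prime hp.out
    have hm : MacLaneHom (algebraMap k F) := MacLaneHom.of_comp (g := algebraMap F K) h
    obtain ⟨s, hs, hs'⟩ :=
      exists_isTranscendenceBasis_and_isSeparable_of_linearIndepOn_pow_of_essFiniteType
        (k := k) (K := F) p hp.out (by
          intro s hs
          have e := s.equivFin
          have := hm.linearIndependent p hp.out hpk (fun i => ((e.symm i : s) : F))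
            ((linearIndependent_equiv e.symm).mpr hs)
          exact (linearIndependent_equiv e.symm).mp this)
    exact ⟨s, hs.1, hs'⟩
end

section
open TensorProduct

lemma subsingleton_h1Cotangent_iff_mvPolynomial (k A : Type*) [CommRing k] [CommRing A] [Algebra k A] :
    Subsingleton (Algebra.H1Cotangent k A) ↔ ∀ x : MvPolynomial A k,
      MvPolynomial.aeval (id : A → A) x = 0 →
      (∀ a, MvPolynomial.aeval (id : A → A) (MvPolynomial.pderiv a x) = 0) →
      x ∈ (RingHom.ker (MvPolynomial.aeval (R := k) (id : A → A))) ^ 2 := by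
  let P := Algebra.Generators.self k A
  have hfs : Algebra.FormallySmooth k (MvPolynomial A k) := inferInstance
  have : Algebra.FormallySmooth k P.toExtension.Ring := hfs
  rw [← Algebra.Extension.cotangentComplex_injective_iff P.toExtension,
    injective_iff_map_eq_zero]
  have hker : P.ker = RingHom.ker (MvPolynomial.aeval (R := k) (id : A → A)) := by
    rw [Algebra.Generators.ker_eq_ker_aeval_val]
    rfl
  have key : ∀ (x : P.ker), P.toExtension.cotangentComplex (.mk x) = 0 ↔
      (∀ a, MvPolynomial.aeval (id : A → A) (MvPolynomial.pderiv a x.1) = 0) := by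
    intro x
    rw [← P.cotangentSpaceBasis.repr.map_eq_zero_iff, Finsupp.ext_iff]
    refine forall_congr' fun a => ?_
    have h1 : P.cotangentSpaceBasis.repr (P.toExtension.cotangentComplex (.mk x)) a =
        MvPolynomial.aeval P.val (MvPolynomial.pderiv a x.1) :=
      Algebra.Generators.cotangentSpaceBasis_repr_one_tmul P x.1 a
    rw [h1]
    rfl
  constructor
  · intro H x hx hd
    have hx' : x ∈ P.ker := by rw [hker]; exact hx
    have := H (.mk ⟨x, hx'⟩) ((key ⟨x, hx'⟩).mpr hd)
    rw [Algebra.Extension.Cotangent.mk_eq_zero_iff] at this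
    rw [← hker]
    exact this
  · intro H y hy
    obtain ⟨x, rfl⟩ := Algebra.Extension.Cotangent.mk_surjective y
    rw [Algebra.Extension.Cotangent.mk_eq_zero_iff]
    have h2 := H x.1 (RingHom.mem_ker.mp (hker ▸ x.2)) ((key x).mp hy)
    rw [← hker] at h2
    exact h2

lemma formallySmooth_of_fg (k K : Type*) [Field k] [Field K] [Algebra k K]
    (H : ∀ F : IntermediateField k K, F.FG → Algebra.FormallySmooth k F) :
    Algebra.FormallySmooth k K := by
  refine ⟨inferInstance, ?_⟩
  rw [subsingleton_h1Cotangent_iff_mvPolynomial]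
  intro x hx hd
  let F := IntermediateField.adjoin k (x.vars : Set K)
  have hF := H F ⟨x.vars, rfl⟩
  obtain ⟨q, hq⟩ := MvPolynomial.exists_rename_eq_of_vars_subset_range x ((↑) : F → K)
    Subtype.val_injective (by
      rw [Subtype.range_coe]
      exact IntermediateField.subset_adjoin _ _)
  have h1 := (subsingleton_h1Cotangent_iff_mvPolynomial k F).mp inferInstance q
  have hcomm : ∀ q : MvPolynomial F k, MvPolynomial.aeval (id : K → K)
      (MvPolynomial.rename ((↑) : F → K) q) = ((MvPolynomial.aeval (id : F → F) q : F) : K) := by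
    intro q
    rw [MvPolynomial.aeval_rename]
    change _ = F.val (MvPolynomial.aeval (id : F → F) q)
    rw [MvPolynomial.comp_aeval_apply]
    rfl
  have h2 := h1 (Subtype.ext (by rw [← hcomm, hq]; exact hx)) (fun a => Subtype.ext (by
    rw [← hcomm, ← MvPolynomial.pderiv_rename Subtype.val_injective, hq]
    exact hd a))
  have h3 := Ideal.mem_map_of_mem (MvPolynomial.rename (R := k) ((↑) : F → K)) h2
  rw [Ideal.map_pow, hq] at h3
  refine Ideal.pow_right_mono ?_ 2 h3
  rw [Ideal.map_le_iff_le_comap]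
  intro y hy
  rw [Ideal.mem_comap, RingHom.mem_ker, hcomm, RingHom.mem_ker.mp hy]
  rfl

lemma RingHom.IsSeparableFieldHom.formallySmooth {k K : Type u} [Field k] [Field K] {β : k →+* K}
    (h : β.IsSeparableFieldHom) : β.FormallySmooth := by
  let _ : Algebra k K := β.toAlgebra
  have : Algebra.FormallySmooth k K := by
    refine formallySmooth_of_fg k K fun F hF => ?_
    obtain ⟨s, hs, hsep⟩ := h F hF
    have hr : Set.range ((↑) : s → F) = s := Subtype.range_coe
    have : Algebra.IsSeparable (IntermediateField.adjoin k (Set.range ((↑) : s → F))) F := by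
      rw [hr]; exact hsep
    exact Algebra.FormallySmooth.of_algebraicIndependent_of_isSeparable hs
  exact this
end

section
lemma ringEnd_mul_apply {A : Type*} [CommRing A] (f g : A →+* A) (x : A) :
    (f * g) x = f (g x) := rfl

lemma MacLaneHom.pow {k : Type*} [Field k] {σ : k →+* k} (h : MacLaneHom σ) (n : ℕ) :
    MacLaneHom (σ ^ n) := by
  induction n with
  | zero => exact MacLaneHom.of_bijective (f := σ ^ 0) (by rw [pow_zero]; exact Function.bijective_id)
  | succ n ih => rw [pow_succ]; exact MacLaneHom.comp (f := σ) (g := σ ^ n) h ih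

lemma exists_perfection {k : Type u} [Field k] (σ : k →+* k) :
    ∃ (K : Type u) (_ : Field K) (ι : k →+* K) (τ : K →+* K), Function.Bijective τ ∧
      (∀ x, τ (ι x) = ι (σ x)) ∧ ∀ x, ∃ n, (τ ^ n) x ∈ Set.range ι := by
  let f : ∀ i j : ℕ, i ≤ j → k →+* k := fun i j _ => σ ^ (j - i)
  have : DirectedSystem (fun _ : ℕ => k) (f · · ·) := ⟨by
      intro i x; simp [f], by
      intro i j l hij hjl x
      simp only [f]
      rw [← ringEnd_mul_apply, ← pow_add]
      congr 2; omega⟩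
  let K := DirectLimit (fun _ : ℕ => k) f
  let o : ∀ i : ℕ, k →+* K := fun i => DirectLimit.Ring.of (fun _ : ℕ => k) f i
  have ho : ∀ i j (h : i ≤ j) x, o j ((σ ^ (j - i)) x) = o i x := fun i j h x =>
    DirectLimit.Ring.of_f (G := fun _ : ℕ => k) (f := f) h x
  have hos : ∀ i x, o (i + 1) (σ x) = o i x := fun i x => by
    rw [← ho i (i + 1) (Nat.le_succ i) x]; simp
  let τ : K →+* K := DirectLimit.Ring.lift (fun _ : ℕ => k) f K (fun i => (o i).comp σ) (by
    intro i j h x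
    simp only [RingHom.comp_apply, f]
    rw [← ho i j h, ← ringEnd_mul_apply, ← ringEnd_mul_apply]
    rw [← pow_succ, ← pow_succ'])
  have hτ : ∀ i x, τ (o i x) = o i (σ x) := fun i x => DirectLimit.Ring.lift_of ..
  have hsurj : ∀ z : K, ∃ i x, o i x = z := by
    intro z
    induction z using DirectLimit.induction with
    | _ i x => exact ⟨i, x, rfl⟩
  refine ⟨K, inferInstance, o 0, τ, ⟨RingHom.injective _, fun z => ?_⟩, hτ 0, fun z => ?_⟩
  · obtain ⟨i, x, rfl⟩ := hsurj z
    exact ⟨o (i + 1) x, by rw [hτ, hos]⟩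
  · obtain ⟨i, x, rfl⟩ := hsurj z
    refine ⟨i, x, ?_⟩
    have : ∀ n, (τ ^ n) (o i x) = o i ((σ ^ n) x) := by
      intro n
      induction n with
      | zero => simp
      | succ n ih => rw [pow_succ', pow_succ', ringEnd_mul_apply, ringEnd_mul_apply, ih, hτ]
    rw [this, ← ho 0 i (Nat.zero_le i) x]
    rfl

lemma macLane_perfection {k K : Type*} [Field k] [Field K] {σ : k →+* k} (h : MacLaneHom σ)
    (ι : k →+* K) (τ : K →+* K) (hτ : ∀ x, τ (ι x) = ι (σ x))
    (H : ∀ x, ∃ n, (τ ^ n) x ∈ Set.range ι) : MacLaneHom ι := by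
  have hτn : ∀ n x, (τ ^ n) (ι x) = ι ((σ ^ n) x) := by
    intro n x
    induction n with
    | zero => simp
    | succ n ih => rw [pow_succ', pow_succ', ringEnd_mul_apply, ringEnd_mul_apply, ih, hτ]
  intro p hp hc n c x hx hsum
  choose N hN using fun i => H (x i)
  have h1 : ∀ i, ∃ y, ι y = (τ ^ (∑ i, N i)) (x i) := by
    intro i
    obtain ⟨y, hy⟩ := hN i
    have : ∑ i, N i = (∑ i, N i - N i) + N i := (Nat.sub_add_cancel
      (Finset.single_le_sum (fun _ _ => Nat.zero_le _) (Finset.mem_univ i))).symm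
    rw [this, pow_add, ringEnd_mul_apply, ← hy, hτn]
    exact ⟨_, rfl⟩
  choose y hy using h1
  refine h.pow (∑ i, N i) p hp hc n c y ?_ ?_
  · rintro rfl
    apply hx
    ext i
    have := hy i
    rw [Pi.zero_apply, map_zero] at this
    exact (map_eq_zero _).mp this.symm
  · apply ι.injective
    have := congrArg (τ ^ (∑ i, N i)) hsum
    rw [map_sum, map_zero] at this
    rw [map_sum, map_zero, ← this]
    refine Finset.sum_congr rfl fun i _ => ?_
    rw [map_mul, map_mul, map_pow, map_pow, hy, hτn]
end

section
/-- `c : T → S` exhibits `S` as the `I`-adic completion of `T`. -/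
structure IsCompl' {T S : Type*} [CommRing T] [CommRing S] (I : Ideal T) (c : T →+* S) : Prop where
  complete : IsAdicComplete (I.map c) S
  dense : ∀ n (x : S), ∃ t, x - c t ∈ (I.map c) ^ n
  inj : ∀ n t, c t ∈ (I.map c) ^ n → t ∈ I ^ n

lemma isCompl'_algebraMap {T : Type*} [CommRing T] (I : Ideal T) (hI : I.FG) :
    IsCompl' I (algebraMap T (AdicCompletion I T)) := by
  have key : ∀ n (x : AdicCompletion I T), x ∈ (I.map (algebraMap T (AdicCompletion I T))) ^ n ↔
      AdicCompletion.evalₐ I n x = 0 := by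
    intro n x
    have h := SetLike.ext_iff.mp (AdicCompletion.pow_smul_top_eq_ker_eval (I := I) (M := T) (n := n) hI) x
    rw [← Ideal.map_pow]
    have h2 : x ∈ (I ^ n • ⊤ : Submodule T (AdicCompletion I T)) ↔
        x ∈ (I ^ n).map (algebraMap T (AdicCompletion I T)) := by
      rw [Ideal.smul_top_eq_map]
      rfl
    rw [← h2, h, LinearMap.mem_ker]
    constructor
    · intro h0
      rw [← AdicCompletion.factor_eval_eq_evalₐ I x (by simp), h0, map_zero]
    · intro h0
      rw [← AdicCompletion.factor_evalₐ_eq_eval I x (by simp), h0, map_zero]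
  refine ⟨AdicCompletion.isAdicComplete_self I hI, ?_, ?_⟩
  · intro n x
    obtain ⟨t, ht⟩ := Ideal.Quotient.mk_surjective (AdicCompletion.evalₐ I n x)
    refine ⟨t, ?_⟩
    rw [key, map_sub, ← ht]
    have := AdicCompletion.evalₐ_of I n t
    rw [sub_eq_zero]
    exact this.symm
  · intro n t ht
    rw [key] at ht
    have := AdicCompletion.evalₐ_of I n t
    rw [← Ideal.Quotient.eq_zero_iff_mem, ← this]
    exact ht

lemma exists_isCompl' (T : Type u) [CommRing T] (I : Ideal T) (hI : I.FG) :
    ∃ (S : Type u) (_ : CommRing S) (c : T →+* S), IsCompl' I c ∧ (IsNoetherianRing T → c.Flat) := by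
  refine ⟨AdicCompletion I T, inferInstance, algebraMap _ _, isCompl'_algebraMap I hI, ?_⟩
  intro hT
  rw [RingHom.flat_algebraMap_iff]
  exact AdicCompletion.flat_of_isNoetherian I

lemma IsCompl'.extend {T S B : Type*} [CommRing T] [CommRing S] [CommRing B] {I : Ideal T}
    {c : T →+* S} (hc : IsCompl' I c) (J : Ideal B) [IsAdicComplete J B] (f : T →+* B)
    (hf : I.map f ≤ J) : ∃ g : S →+* B, ∀ t, g (c t) = f t := by
  have hle : ∀ n, I ^ n ≤ (I.map c ^ n).comap c := fun n => by
    rw [← Ideal.map_pow]; exact Ideal.le_comap_map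
  let q : ∀ n, T ⧸ I ^ n →+* S ⧸ (I.map c) ^ n := fun n => Ideal.quotientMap _ c (hle n)
  have hq : ∀ n, Function.Bijective (q n) := by
    intro n
    constructor
    · exact Ideal.quotientMap_injective' (fun t ht => hc.inj n t ht)
    · intro x
      obtain ⟨x, rfl⟩ := Ideal.Quotient.mk_surjective x
      obtain ⟨t, ht⟩ := hc.dense n x
      refine ⟨Ideal.Quotient.mk _ t, ?_⟩
      simp only [q, Ideal.quotientMap_mk]
      exact (Ideal.Quotient.eq.mpr ht).symm
  have hfle : ∀ n, I ^ n ≤ (J ^ n).comap f := fun n => by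
    rw [← Ideal.map_le_iff_le_comap, Ideal.map_pow]
    exact Ideal.pow_right_mono hf n
  let e : ∀ n, S →+* T ⧸ I ^ n := fun n =>
    ((RingEquiv.ofBijective _ (hq n)).symm : S ⧸ (I.map c) ^ n →+* T ⧸ I ^ n).comp
      (Ideal.Quotient.mk _)
  have he : ∀ n x t, x - c t ∈ (I.map c) ^ n → e n x = Ideal.Quotient.mk _ t := by
    intro n x t h
    simp only [e, RingHom.comp_apply, RingHom.coe_coe]
    rw [RingEquiv.symm_apply_eq]
    exact Ideal.Quotient.eq.mpr h
  let g : ∀ n, S →+* B ⧸ J ^ n := fun n => (Ideal.quotientMap _ f (hfle n)).comp (e n)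
  have hg : ∀ n x t, x - c t ∈ (I.map c) ^ n → g n x = Ideal.Quotient.mk _ (f t) := by
    intro n x t h
    simp only [g, RingHom.comp_apply, he n x t h, Ideal.quotientMap_mk]
  have hcompat : ∀ {m n : ℕ} (hle : m ≤ n), (Ideal.Quotient.factorPow J hle).comp (g n) = g m := by
    intro m n h
    ext x
    obtain ⟨t, ht⟩ := hc.dense n x
    rw [RingHom.comp_apply, hg n x t ht, hg m x t (Ideal.pow_le_pow_right h ht)]
    rfl
  refine ⟨IsAdicComplete.liftRingHom J g hcompat, fun t => ?_⟩
  rw [IsHausdorff.eq_iff_smodEq (I := J)]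
  intro n
  have : Ideal.Quotient.mk (J ^ n) (IsAdicComplete.liftRingHom J g hcompat (c t)) =
      Ideal.Quotient.mk (J ^ n) (f t) := by
    rw [IsAdicComplete.mk_liftRingHom, hg n (c t) t (by simp)]
  rw [SModEq.sub_mem]
  simpa using Ideal.Quotient.eq.mp this
end

section
lemma RingHom.FormallySmooth.exists_lift_of_nilpotent {k k' B C : Type*} [CommRing k] [CommRing k']
    [CommRing B] [CommRing C] {σ : k →+* k'} (hσ : σ.FormallySmooth) (q : B →+* C)
    (hq : Function.Surjective q) (hn : IsNilpotent (RingHom.ker q)) (g : k →+* B) (s : k' →+* C)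
    (h : ∀ x, s (σ x) = q (g x)) : ∃ s' : k' →+* B, (∀ x, q (s' x) = s x) ∧ ∀ x, s' (σ x) = g x := by
  algebraize [σ, g, q.comp g]
  let q' : B →ₐ[k] C := { q with commutes' := fun x => rfl }
  let s₁ : k' →ₐ[k] C := { s with commutes' := fun x => h x }
  have hn' : IsNilpotent (RingHom.ker (q' : B →+* C)) := hn
  refine ⟨(Algebra.FormallySmooth.liftOfSurjective s₁ q' hq hn' : k' →ₐ[k] B), fun x => ?_, fun x => ?_⟩
  · exact Algebra.FormallySmooth.liftOfSurjective_apply s₁ q' hq hn' x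
  · exact (Algebra.FormallySmooth.liftOfSurjective s₁ q' hq hn').commutes x

lemma exists_coefficient_field {A k : Type*} [CommRing A] [Field k] (m : Ideal A)
    [IsAdicComplete m A] (π : A →+* k) (hπ : Function.Surjective π) (hker : RingHom.ker π = m)
    (φ : A →+* A) (σ : k →+* k) (hσ : σ.FormallySmooth) (hφ : ∀ a, π (φ a) = σ (π a))
    (N c : ℕ) (hN : m.map (φ ^ N) ≤ m ^ 2) (hc : m ^ c ≤ m.map φ) :
    ∃ s : k →+* A, (∀ x, π (s x) = x) ∧ ∀ x, φ (s x) = s (σ x) := by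
  have hm : ∀ a ∈ m, φ a ∈ m := by
    intro a ha
    rw [← hker, RingHom.mem_ker] at ha ⊢
    rw [hφ, ha, map_zero]
  obtain ⟨I, hI⟩ : ∃ I : ℕ → Ideal A, ∀ j, I j = m.map (φ ^ j) := ⟨_, fun _ => rfl⟩
  have hI0 : I 0 = m := by
    rw [hI, pow_zero]
    exact Ideal.map_id m
  have hadd : ∀ i j, (I i).map (φ ^ j) = I (j + i) := by
    intro i j
    rw [hI, hI, pow_add, Ideal.map_map]
    rfl
  have hIφ : ∀ j, (I j).map φ = I (j + 1) := by
    intro j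
    have := hadd j 1
    rwa [pow_one, add_comm] at this
  have hdesc : ∀ j, I (j + 1) ≤ I j := by
    intro j
    rw [← hadd 1 j, ← add_zero j, ← hadd 0 j, hI0]
    refine Ideal.map_mono ?_
    rw [hI, pow_one, Ideal.map_le_iff_le_comap]
    exact hm
  have hanti : Antitone I := antitone_nat_of_succ_le hdesc
  have hpow : ∀ j, I j ^ c ≤ I (j + 1) := by
    intro j
    rw [← hadd 1 j, hI j, ← Ideal.map_pow]
    refine Ideal.map_mono ?_
    simpa [hI] using hc
  have hdeep : ∀ j, I (N * j) ≤ m ^ (j + 1) := by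
    intro j
    induction j with
    | zero => simp [hI0]
    | succ j ih =>
      rw [mul_add, mul_one, add_comm, ← hadd]
      refine (Ideal.map_mono ih).trans ?_
      rw [Ideal.map_pow]
      refine (Ideal.pow_right_mono hN _).trans ?_
      rw [← pow_mul]
      exact Ideal.pow_le_pow_right (by omega)
  obtain ⟨q, hq⟩ : ∃ q : ∀ j, A ⧸ I (j + 1) →+* A ⧸ I j,
      ∀ j, q j = Ideal.Quotient.factor (hdesc j) := ⟨_, fun _ => rfl⟩
  have hqmk : ∀ j a, q j (Ideal.Quotient.mk _ a) = Ideal.Quotient.mk _ a := by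
    intro j a
    rw [hq, Ideal.Quotient.factor_mk]
  obtain ⟨f, hfmk⟩ : ∃ f : ∀ j, A ⧸ I j →+* A ⧸ I (j + 1),
      ∀ j a, f j (Ideal.Quotient.mk _ a) = Ideal.Quotient.mk _ (φ a) :=
    ⟨fun j => Ideal.quotientMap _ φ (by rw [← Ideal.map_le_iff_le_comap, hIφ]),
      fun j a => Ideal.quotientMap_mk⟩
  have hcomm : ∀ j x, f j (q j x) = q (j + 1) (f (j + 1) x) := by
    intro j x
    obtain ⟨x, rfl⟩ := Ideal.Quotient.mk_surjective x
    rw [hqmk, hfmk, hfmk, hqmk]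
  have hqs : ∀ j, Function.Surjective (q j) := fun j => by
    rw [hq]; exact Ideal.Quotient.factor_surjective _
  have hqn : ∀ j, IsNilpotent (RingHom.ker (q j)) := by
    intro j
    refine ⟨c, ?_⟩
    have : RingHom.ker (q j) = (I j).map (Ideal.Quotient.mk (I (j + 1))) := by
      rw [hq]; exact Ideal.Quotient.factor_ker _
    rw [this, ← Ideal.map_pow, Ideal.zero_eq_bot, Ideal.map_eq_bot_iff_le_ker, Ideal.mk_ker]
    exact hpow j
  let P : ∀ j, (k →+* A ⧸ I j) → Prop := fun j s => ∀ x, s (σ x) = q j (f j (s x))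
  have step : ∀ j (s : {s // P j s}), ∃ s' : {s // P (j + 1) s}, (∀ x, q j (s'.1 x) = s.1 x) ∧
      ∀ x, s'.1 (σ x) = f j (s.1 x) := by
    intro j s
    obtain ⟨s', h1, h2⟩ := hσ.exists_lift_of_nilpotent (q j) (hqs j) (hqn j) ((f j).comp s.1) s.1 s.2
    refine ⟨⟨s', fun x => ?_⟩, h1, h2⟩
    rw [h2, RingHom.comp_apply, ← h1, hcomm]
  choose nxt hn1 hn2 using step
  -- base
  have hle : ∀ a ∈ I 0, π a = 0 := by
    intro a ha
    rw [hI0, ← hker] at ha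
    exact ha
  obtain ⟨π₀, hπ₀'⟩ : ∃ π₀ : A ⧸ I 0 →+* k, π₀ = Ideal.Quotient.lift _ π hle := ⟨_, rfl⟩
  have hπ₀mk : ∀ a, π₀ (Ideal.Quotient.mk _ a) = π a := by
    intro a
    rw [hπ₀', Ideal.Quotient.lift_mk]
  have hπ₀ : Function.Bijective π₀ := by
    rw [hπ₀']
    constructor
    · refine RingHom.lift_injective_of_ker_le_ideal _ hle ?_
      rw [hker, hI0]
    · exact Ideal.Quotient.lift_surjective_of_surjective _ hle hπ
  let e := RingEquiv.ofBijective π₀ hπ₀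
  have base : P 0 (e.symm : k →+* A ⧸ I 0) := by
    intro x
    obtain ⟨x, rfl⟩ := e.surjective x
    obtain ⟨a, rfl⟩ := Ideal.Quotient.mk_surjective x
    simp only [RingHom.coe_coe, RingEquiv.symm_apply_apply]
    rw [RingEquiv.symm_apply_eq]
    simp only [e, RingEquiv.ofBijective_apply]
    rw [hfmk, hqmk, hπ₀mk, hπ₀mk, hφ]
  obtain ⟨s, hs0', hsS⟩ : ∃ s : ∀ j, {s // P j s}, s 0 = ⟨_, base⟩ ∧ ∀ j, s (j + 1) = nxt j (s j) :=
    ⟨fun j => Nat.rec ⟨_, base⟩ (fun j t => nxt j t) j, rfl, fun j => rfl⟩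
  have hs1 : ∀ j x, q j ((s (j + 1)).1 x) = (s j).1 x := fun j x => by rw [hsS]; exact hn1 j (s j) x
  have hs2 : ∀ j x, (s (j + 1)).1 (σ x) = f j ((s j).1 x) := fun j x => by
    rw [hsS]; exact hn2 j (s j) x
  have hs0 : ∀ x, π₀ ((s 0).1 x) = x := fun x => by rw [hs0']; exact e.apply_symm_apply x
  have hfac : ∀ i j (h : i ≤ j) x, Ideal.Quotient.factor (hanti h) ((s j).1 x) = (s i).1 x := by
    intro i j h x
    induction j, h using Nat.le_induction with
    | base => simp
    | succ j h ih =>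
      rw [← ih, ← hs1 j]
      obtain ⟨a, ha⟩ := Ideal.Quotient.mk_surjective ((s (j + 1)).1 x)
      rw [← ha, hqmk, Ideal.Quotient.factor_mk, Ideal.Quotient.factor_mk]
  have hd : ∀ n, I (N * n) ≤ m ^ n := fun n => (hdeep n).trans (Ideal.pow_le_pow_right (by omega))
  obtain ⟨g, hgdef⟩ : ∃ g : ∀ n, k →+* A ⧸ m ^ n,
      ∀ n, g n = (Ideal.Quotient.factor (hd n)).comp (s (N * n)).1 := ⟨_, fun _ => rfl⟩
  have hg : ∀ n j (h : I j ≤ m ^ n) x a, (s j).1 x = Ideal.Quotient.mk _ a →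
      g n x = Ideal.Quotient.mk _ a := by
    intro n j h x a ha
    obtain ⟨b, hb⟩ := Ideal.Quotient.mk_surjective ((s (max j (N * n))).1 x)
    have h1 := hfac j _ (le_max_left j (N * n)) x
    have h2 := hfac (N * n) _ (le_max_right j (N * n)) x
    rw [← hb, ha] at h1
    rw [← hb] at h2
    rw [hgdef, RingHom.comp_apply, ← h2]
    rw [Ideal.Quotient.factor_mk] at h1 ⊢
    rw [Ideal.Quotient.factor_mk]
    have h3 := Ideal.Quotient.eq.mp h1
    exact Ideal.Quotient.eq.mpr (h h3)
  have hgc : ∀ {i n : ℕ} (hle : i ≤ n), (Ideal.Quotient.factorPow m hle).comp (g n) = g i := by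
    intro i n h
    ext x
    obtain ⟨a, ha⟩ := Ideal.Quotient.mk_surjective ((s (N * n)).1 x)
    rw [RingHom.comp_apply, hg n _ (hd n) x a ha.symm,
      hg i _ ((hd n).trans (Ideal.pow_le_pow_right h)) x a ha.symm]
    exact Ideal.Quotient.factor_mk _ _
  obtain ⟨S, hSmk⟩ : ∃ S : k →+* A, ∀ n x, Ideal.Quotient.mk (m ^ n) (S x) = g n x :=
    ⟨IsAdicComplete.liftRingHom m g hgc, fun n x => IsAdicComplete.mk_liftRingHom ..⟩
  have hS : ∀ n j (h : I j ≤ m ^ n) x a, (s j).1 x = Ideal.Quotient.mk _ a → S x - a ∈ m ^ n := by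
    intro n j h x a ha
    refine Ideal.Quotient.eq.mp ?_
    rw [hSmk]
    exact hg n j h x a ha
  refine ⟨S, fun x => ?_, fun x => ?_⟩
  · obtain ⟨a, ha⟩ := Ideal.Quotient.mk_surjective ((s 0).1 x)
    have h1 := hS 1 0 (by rw [hI0, pow_one]) x a ha.symm
    rw [pow_one, ← hker, RingHom.mem_ker, map_sub, sub_eq_zero] at h1
    rw [h1]
    have := hs0 x
    rwa [← ha, hπ₀mk] at this
  · rw [IsHausdorff.eq_iff_smodEq (I := m)]
    intro n
    rw [SModEq.sub_mem]
    obtain ⟨a, ha⟩ := Ideal.Quotient.mk_surjective ((s (N * n)).1 x)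
    have h1 := hS n _ (hd n) x a ha.symm
    have h2 := hS n (N * n + 1) ((hdesc _).trans (hd n)) (σ x) (φ a) (by
      rw [hs2, ← ha, hfmk])
    have h3 : φ (S x - a) ∈ m ^ n := by
      have := Ideal.mem_map_of_mem φ h1
      rw [Ideal.map_pow] at this
      exact Ideal.pow_right_mono (Ideal.map_le_iff_le_comap.mpr hm) n this
    have : φ (S x) - S (σ x) = φ (S x - a) - (S (σ x) - φ a) := by rw [map_sub]; ring
    rw [this]
    simpa using sub_mem h3 h2
end

section
lemma isNoetherianRing_of_complete {B K : Type*} [CommRing B] [Field K] (I : Ideal B) (hI : I.FG)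
    [IsAdicComplete I B] (j : K →+* B) (hj : ∀ b, ∃ x, b - j x ∈ I) : IsNoetherianRing B := by
  obtain ⟨G, hG⟩ := hI
  let T := MvPolynomial G K
  let I₀ : Ideal T := MvPolynomial.idealOfVars G K
  let P := AdicCompletion I₀ T
  have hP : IsNoetherianRing P :=
    isNoetherianRing_of_ringEquiv (MvPowerSeries G K)
      (MvPowerSeries.toAdicCompletionAlgEquiv G K).toRingEquiv
  have hc : IsCompl' I₀ (algebraMap T P) := isCompl'_algebraMap _ (MvPolynomial.idealOfVars_fg G K)
  let f : T →+* B := MvPolynomial.eval₂Hom j (fun g : G => (g : B))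
  have hfX : ∀ g : G, f (MvPolynomial.X g) = g := fun g => MvPolynomial.eval₂Hom_X' _ _ _
  have hfC : ∀ x, f (MvPolynomial.C x) = j x := fun x => MvPolynomial.eval₂Hom_C _ _ _
  have hf : I₀.map f = I := by
    simp only [I₀, MvPolynomial.idealOfVars]
    rw [Ideal.map_span, ← hG]
    congr 1
    ext x
    simp [hfX]
  obtain ⟨g, hg⟩ := hc.extend I f hf.le
  have hgI : (I₀.map (algebraMap T P)).map g = I := by
    rw [Ideal.map_map, ← hf]
    congr 1
    ext x <;> simp [hg]
  have : IsPrecomplete (I₀.map (algebraMap T P)) P := hc.complete.toIsPrecomplete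
  have : IsHausdorff ((I₀.map (algebraMap T P)).map g) B := by rw [hgI]; infer_instance
  refine isNoetherianRing_of_surjective P B g
    (surjective_of_mk_map_comp_surjective g (I := I₀.map (algebraMap T P)) ?_)
  intro b
  obtain ⟨b, rfl⟩ := Ideal.Quotient.mk_surjective b
  obtain ⟨x, hx⟩ := hj b
  refine ⟨algebraMap T P (MvPolynomial.C x), ?_⟩
  rw [RingHom.comp_apply, hg, eq_comm, Ideal.Quotient.eq, hgI]
  simpa [hfC] using hx
end

section
lemma mem_smul_top_pi {S ι : Type*} [CommRing S] [Finite ι] (I : Ideal S) (x : ι → S) :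
    x ∈ (I • ⊤ : Submodule S (ι → S)) ↔ ∀ i, x i ∈ I := by
  classical
  have := Fintype.ofFinite ι
  constructor
  · intro h i
    have := Submodule.mem_map_of_mem (f := LinearMap.proj (R := S) (φ := fun _ : ι => S) i) h
    rw [Submodule.map_smul''] at this
    have h2 := Submodule.smul_mono (le_refl I) le_top this
    simpa using h2
  · intro h
    rw [pi_eq_sum_univ x]
    exact Submodule.sum_mem _ fun i _ => Submodule.smul_mem_smul (h i) trivial

lemma isPrecomplete_pi {S ι : Type*} [CommRing S] [Finite ι] (I : Ideal S) [IsPrecomplete I S] :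
    IsPrecomplete I (ι → S) := by
  constructor
  intro f hf
  have h : ∀ i, ∃ L : S, ∀ n, f n i ≡ L [SMOD (I ^ n • ⊤ : Submodule S S)] := by
    intro i
    refine IsPrecomplete.prec inferInstance (f := fun n => f n i) ?_
    intro m n hmn
    have := hf hmn
    rw [SModEq.sub_mem, mem_smul_top_pi] at this
    rw [SModEq.sub_mem]
    simpa using this i
  choose L hL using h
  refine ⟨L, fun n => ?_⟩
  rw [SModEq.sub_mem, mem_smul_top_pi]
  intro i
  have := hL i n
  rw [SModEq.sub_mem] at this
  simpa using this

lemma finite_of_complete {S S' : Type*} [CommRing S] [CommRing S'] (n : Ideal S) (n' : Ideal S')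
    [IsAdicComplete n S] [IsHausdorff n' S'] (ψ : S →+* S') (hn' : n'.FG) (hψ : n.map ψ ≤ n')
    (c : ℕ) (hc : n' ^ c ≤ n.map ψ) (hs : ∀ y, ∃ x, y - ψ x ∈ n') : ψ.Finite := by
  classical
  algebraize [ψ]
  change Module.Finite S S'
  have hmem : ∀ x y, x • y = ψ x * y := fun x y => Algebra.smul_def x y
  have key : ∀ i, ∃ F : Finset S', ∀ y, ∃ z ∈ Submodule.span S (F : Set S'), y - z ∈ n' ^ i := by
    intro i
    induction i with
    | zero => exact ⟨∅, fun y => ⟨0, by simp, by simp⟩⟩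
    | succ i ih =>
      obtain ⟨F, hF⟩ := ih
      obtain ⟨G, hG⟩ : (n' ^ i).FG := Ideal.FG.pow hn'
      have hGs : ∀ x ∈ n' ^ i, ∀ b : S', ∃ z ∈ Submodule.span S (G : Set S'), b * x - z ∈ n' ^ (i + 1) := by
        intro x hx
        rw [← hG] at hx
        induction hx using Submodule.span_induction with
        | mem x hx =>
          intro b
          obtain ⟨a, ha⟩ := hs b
          refine ⟨a • x, Submodule.smul_mem _ _ (Submodule.subset_span hx), ?_⟩
          rw [hmem, ← sub_mul, pow_succ']
          refine Ideal.mul_mem_mul ha ?_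
          rw [← hG]
          exact Submodule.subset_span hx
        | zero => exact fun b => ⟨0, by simp, by simp⟩
        | add x y _ _ hx hy =>
          intro b
          obtain ⟨z, hz, h1⟩ := hx b
          obtain ⟨w, hw, h2⟩ := hy b
          refine ⟨z + w, add_mem hz hw, ?_⟩
          have : b * (x + y) - (z + w) = (b * x - z) + (b * y - w) := by ring
          rw [this]
          exact add_mem h1 h2
        | smul a x _ hx =>
          intro b
          obtain ⟨z, hz, h1⟩ := hx (b * a)
          refine ⟨z, hz, ?_⟩
          rwa [smul_eq_mul, ← mul_assoc]
      refine ⟨F ∪ G, fun y => ?_⟩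
      obtain ⟨z, hz, h1⟩ := hF y
      obtain ⟨w, hw, h2⟩ := hGs _ h1 1
      refine ⟨z + w, ?_, ?_⟩
      · rw [Finset.coe_union, Submodule.span_union]
        exact Submodule.add_mem_sup hz hw
      · have : y - (z + w) = 1 * (y - z) - w := by ring
        rwa [this]
  obtain ⟨F, hF⟩ := key c
  have hsm : ∀ i, (n ^ i • ⊤ : Submodule S S') = ((n.map ψ) ^ i).restrictScalars S := by
    intro i
    rw [Ideal.smul_top_eq_map, Ideal.map_pow]
    rfl
  have : IsHausdorff n S' := by
    constructor
    intro x hx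
    refine IsHausdorff.haus (I := n') inferInstance x fun i => ?_
    have := hx i
    rw [SModEq.zero, hsm] at this
    rw [SModEq.zero]
    simpa using Ideal.pow_right_mono hψ i this
  have := isPrecomplete_pi (ι := F) n
  let L : (F → S) →ₗ[S] S' := Fintype.linearCombination S ((↑) : F → S')
  refine Module.Finite.of_surjective L (surjective_of_mkQ_comp_surjective (I := n) ?_)
  intro y
  obtain ⟨y, rfl⟩ := Submodule.mkQ_surjective _ y
  obtain ⟨z, hz, h1⟩ := hF y
  have hz' : z ∈ LinearMap.range L := by
    rw [Fintype.range_linearCombination]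
    simpa using hz
  obtain ⟨w, rfl⟩ := hz'
  refine ⟨w, ?_⟩
  rw [LinearMap.comp_apply, eq_comm, ← sub_eq_zero, ← map_sub, Submodule.mkQ_apply,
    Submodule.Quotient.mk_eq_zero]
  have := hsm 1
  rw [pow_one, pow_one] at this
  rw [this]
  exact hc h1
end

section
lemma flat_of_isCompl' {A T S : Type*} [CommRing A] [CommRing T] [CommRing S] [Algebra A T]
    [Algebra T S] [Algebra A S] [IsScalarTower A T S] [IsNoetherianRing A] [IsNoetherianRing S]
    [IsLocalRing S] [Module.Flat A T] (m : Ideal A)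
    (hc : IsCompl' (m.map (algebraMap A T)) (algebraMap T S))
    (hm : m.map (algebraMap A S) ≤ maximalIdeal S) : Module.Flat A S := by
  classical
  have hmS : (m.map (algebraMap A T)).map (algebraMap T S) = m.map (algebraMap A S) := by
    rw [Ideal.map_map, ← IsScalarTower.algebraMap_eq]
  set n := m.map (algebraMap A S) with hn
  rw [Module.Flat.iff_forall_isTrivialRelation]
  intro l f x hx
  let F : (Fin l → A) →ₗ[A] A := Fintype.linearCombination A f
  have hF : ∀ a, F a = ∑ i, f i * a i := by
    intro a
    simp only [F, Fintype.linearCombination_apply, smul_eq_mul]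
    exact Finset.sum_congr rfl fun i _ => mul_comm _ _
  -- Artin-Rees
  obtain ⟨c, hAR⟩ : ∃ c, ∀ j a, F a ∈ m ^ (j + c) → ∃ e : Fin l → A, (∀ i, e i ∈ m ^ j) ∧ F e = F a := by
    obtain ⟨c, hcc⟩ := Ideal.exists_pow_inf_eq_pow_smul m (LinearMap.range F)
    refine ⟨c, fun j a ha => ?_⟩
    have h1 : F a ∈ m ^ (j + c) • (⊤ : Submodule A A) ⊓ LinearMap.range F :=
      ⟨by simpa using ha, a, rfl⟩
    rw [hcc (j + c) (by omega), Nat.add_sub_cancel] at h1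
    have h2 := Submodule.smul_mono (le_refl (m ^ j)) inf_le_right h1
    rw [LinearMap.range_eq_map, ← Submodule.map_smul''] at h2
    obtain ⟨e, he, h3⟩ := h2
    exact ⟨e, (mem_smul_top_pi _ _).mp he, h3⟩
  let γ : (Fin l → A) → (Fin l → S) := fun a i => algebraMap A S (a i)
  let Q : Submodule S (Fin l → S) := Submodule.span S (γ '' {a | F a = 0})
  have hxj : ∀ j, x ∈ Q ⊔ n ^ j • ⊤ := by
    intro j
    choose t ht using fun i => hc.dense (j + c) (x i)
    rw [hmS] at ht
    have h1 : ∑ i, f i • t i ∈ (m.map (algebraMap A T)) ^ (j + c) := by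
      apply hc.inj
      rw [hmS]
      have : algebraMap T S (∑ i, f i • t i) = - ∑ i, f i • (x i - algebraMap T S (t i)) := by
        simp only [smul_sub, Finset.sum_sub_distrib, hx, map_sum, zero_sub, neg_neg]
        refine Finset.sum_congr rfl fun i _ => ?_
        rw [Algebra.smul_def, map_mul, Algebra.smul_def, IsScalarTower.algebraMap_apply A T S]
      rw [this]
      refine neg_mem (sum_mem fun i _ => ?_)
      rw [Algebra.smul_def]
      exact Ideal.mul_mem_left _ _ (ht i)
    rw [← Ideal.map_pow] at h1
    obtain ⟨r, g, u, hgu⟩ : ∃ (r : ℕ) (g : Fin r → A) (u : Fin r → T), (∀ h, g h ∈ m ^ (j + c)) ∧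
        ∑ i, f i • t i = ∑ h, g h • u h := by
      have h2 : ∑ i, f i • t i ∈ Submodule.span T ((algebraMap A T) '' (m ^ (j + c) : Ideal A)) := h1
      rw [Submodule.mem_span_image_iff_exists_fun] at h2
      obtain ⟨s, hs, cc, hcc⟩ := h2
      refine ⟨s.card, fun h => (s.equivFin.symm h : A), fun h => cc (s.equivFin.symm h), fun h => hs (s.equivFin.symm h).2, ?_⟩
      rw [← hcc, ← s.equivFin.symm.sum_comp]
      refine Finset.sum_congr rfl fun i _ => ?_
      simp only [Algebra.smul_def, Algebra.algebraMap_self, RingHom.id_apply, mul_comm]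
    have hrel : ∑ i, Sum.elim f (fun h => - g h) i • Sum.elim t u i = 0 := by
      simp [Fintype.sum_sum_type, hgu.2]
    obtain ⟨κ, a, y, h3, h4⟩ : Module.IsTrivialRelation (Sum.elim f (fun h => - g h)) (Sum.elim t u) := by
      exact Module.Flat.isTrivialRelation_of_sum_smul_eq_zero hrel
    have h5 : ∀ q : Fin κ, F (fun i => a (Sum.inl i) q) ∈ m ^ (j + c) := by
      intro q
      have := h4 q
      simp only [Fintype.sum_sum_type, Sum.elim_inl, Sum.elim_inr, neg_mul, Finset.sum_neg_distrib] at this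
      rw [← sub_eq_add_neg, sub_eq_zero] at this
      rw [hF, this]
      exact sum_mem fun h _ => Ideal.mul_mem_right _ _ (hgu.1 h)
    choose e he1 he2 using fun q => hAR j _ (h5 q)
    have h6 : x = (∑ q, algebraMap T S (y q) • γ (fun i => a (Sum.inl i) q - e q i)) +
        ((∑ q, algebraMap T S (y q) • γ (e q)) + fun i => x i - algebraMap T S (t i)) := by
      ext i
      have := h3 (Sum.inl i)
      simp only [Sum.elim_inl] at this
      simp only [Pi.add_apply, Finset.sum_apply, Pi.smul_apply, smul_eq_mul, γ, map_sub]
      rw [this, map_sum]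
      simp only [Algebra.smul_def, map_mul, ← IsScalarTower.algebraMap_apply A T S, mul_sub, Finset.sum_sub_distrib]
      simp only [mul_comm]
      ring
    rw [h6]
    refine Submodule.add_mem_sup (sum_mem fun q _ => Submodule.smul_mem _ _ (Submodule.subset_span ⟨_, ?_, rfl⟩)) ?_
    · have : F ((fun i => a (Sum.inl i) q) - e q) = 0 := by rw [map_sub, he2, sub_self]
      exact this
    · refine add_mem (sum_mem fun q _ => Submodule.smul_mem _ _ ?_) ?_
      · rw [mem_smul_top_pi]
        intro i
        rw [hn, ← Ideal.map_pow]
        exact Ideal.mem_map_of_mem _ (he1 q i)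
      · rw [mem_smul_top_pi]
        exact fun i => Ideal.pow_le_pow_right (by omega) (ht i)
  have hxQ : x ∈ Q := by
    rw [← Submodule.Quotient.mk_eq_zero]
    have : IsHausdorff n ((Fin l → S) ⧸ Q) :=
      IsHausdorff.of_le_jacobson _ _ (hm.trans (maximalIdeal_le_jacobson _))
    refine IsHausdorff.haus this _ fun j => ?_
    rw [SModEq.zero]
    obtain ⟨a, ha, b, hb, rfl⟩ := Submodule.mem_sup.mp (hxj j)
    rw [Submodule.Quotient.mk_add, (Submodule.Quotient.mk_eq_zero Q).mpr ha, zero_add]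
    have := Submodule.mem_map_of_mem (f := Q.mkQ) hb
    rw [Submodule.map_smul''] at this
    exact Submodule.smul_mono le_rfl le_top this
  rw [Submodule.mem_span_image_iff_exists_fun] at hxQ
  obtain ⟨s, hs, cc, hcc⟩ := hxQ
  refine ⟨s.card, fun i q => (s.equivFin.symm q).1 i, fun q => cc (s.equivFin.symm q), ?_, ?_⟩
  · intro i
    rw [← hcc, Finset.sum_apply, ← s.equivFin.symm.sum_comp]
    refine Finset.sum_congr rfl fun q _ => ?_
    rw [Pi.smul_apply, smul_eq_mul, mul_comm, Algebra.smul_def]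
  · intro q
    have : F _ = 0 := hs (s.equivFin.symm q).2
    rwa [hF] at this
end

section
open TensorProduct

/-- Base change of `A` along a field extension, with an endomorphism. -/
lemma exists_baseChange {k K A : Type u} [Field k] [Field K] [CommRing A] (ι : k →+* K)
    (s : k →+* A) (π : A →+* k) (hs : ∀ x, π (s x) = x) (φ : A →+* A) (σ : k →+* k) (τ : K →+* K)
    (hφ : ∀ x, φ (s x) = s (σ x)) (hτ : ∀ x, τ (ι x) = ι (σ x)) :
    ∃ (T : Type u) (_ : CommRing T) (jA : A →+* T) (jK : K →+* T) (ε : T →+* K) (θ : T →+* T),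
      jA.Flat ∧ (∀ x, ε (jK x) = x) ∧ (∀ a, ε (jA a) = ι (π a)) ∧
      RingHom.ker ε = (RingHom.ker π).map jA ∧
      (∀ a, θ (jA a) = jA (φ a)) ∧ (∀ x, θ (jK x) = jK (τ x)) := by
  letI := ι.toAlgebra
  letI := s.toAlgebra
  let jA : A →+* A ⊗[k] K := algebraMap A _
  let jK : K →+* A ⊗[k] K := (Algebra.TensorProduct.includeRight : K →ₐ[k] A ⊗[k] K).toRingHom
  have hj : ∀ x : k, jA (s x) = jK (ι x) := by
    intro x
    have h1 : jA (algebraMap k A x) = algebraMap k _ x := (IsScalarTower.algebraMap_apply k A (A ⊗[k] K) x).symm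
    have h2 : jK (algebraMap k K x) = algebraMap k _ x := (Algebra.TensorProduct.includeRight : K →ₐ[k] A ⊗[k] K).commutes x
    exact h1.trans h2.symm
  have hlift : ∀ (B : Type u) [CommRing B] (f : A →+* B) (g : K →+* B), (∀ x, f (s x) = g (ι x)) →
      ∃ h : A ⊗[k] K →+* B, (∀ a, h (jA a) = f a) ∧ (∀ x, h (jK x) = g x) := by
    intro B _ f g hfg
    letI := (f.comp s).toAlgebra
    let f' : A →ₐ[k] B := { f with commutes' := fun x => rfl }
    let g' : K →ₐ[k] B := { g with commutes' := fun x => (hfg x).symm }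
    refine ⟨(Algebra.TensorProduct.lift f' g' (fun _ _ => Commute.all _ _)).toRingHom, fun a => ?_, fun x => ?_⟩
    · exact (Algebra.TensorProduct.lift_tmul f' g' _ a 1).trans (by rw [map_one, mul_one]; rfl)
    · exact (Algebra.TensorProduct.lift_tmul f' g' _ 1 x).trans (by rw [map_one, one_mul]; rfl)
  obtain ⟨ε, hε1, hε2⟩ := hlift K (ι.comp π) (RingHom.id K) (fun x => by simp [hs])
  obtain ⟨θ, hθ1, hθ2⟩ := hlift (A ⊗[k] K) (jA.comp φ) (jK.comp τ) (fun x => by simp [hφ, hτ, hj])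
  refine ⟨A ⊗[k] K, inferInstance, jA, jK, ε, θ, ?_, hε2, hε1, ?_, hθ1, hθ2⟩
  · rw [RingHom.flat_algebraMap_iff]; infer_instance
  · apply le_antisymm
    · have key : ∀ t : A ⊗[k] K, t - jK (ε t) ∈ (RingHom.ker π).map jA := by
        intro t
        induction t with
        | zero => simp
        | add x y hx hy => rw [map_add, map_add, add_sub_add_comm]; exact add_mem hx hy
        | tmul a x =>
          have h1 : a ⊗ₜ[k] x = jA a * jK x := by
            change _ = (a ⊗ₜ 1) * (1 ⊗ₜ x)
            simp
          have h2 : a ⊗ₜ[k] x - jK (ε (a ⊗ₜ[k] x)) = jA (a - s (π a)) * jK x := by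
            rw [h1, map_mul ε, hε1, hε2, map_sub, hj, sub_mul]; simp
          rw [h2]
          exact Ideal.mul_mem_right _ _ (Ideal.mem_map_of_mem _ (by simp [RingHom.mem_ker, hs]))
      intro t ht
      have := key t
      rwa [RingHom.mem_ker.mp ht, map_zero, sub_zero] at this
    · rw [Ideal.map_le_iff_le_comap]
      intro a ha
      simp [Ideal.mem_comap, RingHom.mem_ker, hε1, RingHom.mem_ker.mp ha]
end


lemma IsCompl'.exists_residue {T S K : Type*} [CommRing T] [CommRing S] [Field K] {I : Ideal T}
    {c : T →+* S} (hc : IsCompl' I c) (ε : T →+* K) (hker : RingHom.ker ε = I) :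
    ∃ π : S →+* K, (∀ t, π (c t) = ε t) ∧ RingHom.ker π = I.map c := by
  have hle : I.map ε ≤ ⊥ := by
    rw [Ideal.map_le_iff_le_comap, ← hker]; rfl
  obtain ⟨π, hπ⟩ := hc.extend ⊥ ε hle
  have h1 : I.map c ≤ RingHom.ker π := by
    rw [Ideal.map_le_iff_le_comap]
    intro t ht
    rw [Ideal.mem_comap, RingHom.mem_ker, hπ, ← RingHom.mem_ker, hker]
    exact ht
  refine ⟨π, hπ, le_antisymm (fun x hx => ?_) h1⟩
  obtain ⟨t, ht⟩ := hc.dense 1 x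
  rw [pow_one] at ht
  have h2 : π (x - c t) = 0 := h1 ht
  rw [map_sub, RingHom.mem_ker.mp hx, zero_sub, neg_eq_zero, hπ, ← RingHom.mem_ker, hker] at h2
  have := add_mem ht (Ideal.mem_map_of_mem c h2)
  rwa [sub_add_cancel] at this

lemma IsCompl'.exists_end {T S : Type*} [CommRing T] [CommRing S] {I : Ideal T}
    {c : T →+* S} (hc : IsCompl' I c) (θ : T →+* T) (hθ : I.map θ ≤ I) :
    ∃ ψ : S →+* S, ∀ t, ψ (c t) = c (θ t) := by
  have := hc.complete
  refine hc.extend (I.map c) (c.comp θ) ?_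
  rw [← Ideal.map_map]
  exact Ideal.map_mono hθ

lemma map_comm {T S : Type*} [CommRing T] [CommRing S] (I : Ideal T) (c : T →+* S) (θ : T →+* T)
    (ψ : S →+* S) (h : ∀ t, ψ (c t) = c (θ t)) : (I.map c).map ψ = (I.map θ).map c := by
  rw [Ideal.map_map, Ideal.map_map]
  congr 1
  ext t
  exact h t

lemma pow_comm {T S : Type*} [CommRing T] [CommRing S] (c : T →+* S) (θ : T →+* T)
    (ψ : S →+* S) (h : ∀ t, ψ (c t) = c (θ t)) (n : ℕ) (t : T) :
    (ψ ^ n) (c t) = c ((θ ^ n) t) := by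
  induction n generalizing t with
  | zero => rfl
  | succ n ih => rw [pow_succ, pow_succ, ringEnd_mul_apply, ringEnd_mul_apply, h, ih]

lemma pow_le_transfer {T S : Type*} [CommRing T] [CommRing S] (I : Ideal T) (c : T →+* S)
    (θ : T →+* T) (ψ : S →+* S) (h : ∀ t, ψ (c t) = c (θ t)) (e : ℕ) (he : I ^ e ≤ I.map θ) :
    (I.map c) ^ e ≤ (I.map c).map ψ := by
  rw [map_comm I c θ ψ h, ← Ideal.map_pow]
  exact Ideal.map_mono he

lemma contract_transfer {T S : Type*} [CommRing T] [CommRing S] (I : Ideal T) (c : T →+* S)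
    (θ : T →+* T) (ψ : S →+* S) (h : ∀ t, ψ (c t) = c (θ t)) (N : ℕ)
    (hN : ∀ x ∈ I, (θ ^ N) x ∈ I ^ 2) :
    (I.map c).map (ψ ^ N) ≤ (I.map c) ^ 2 := by
  rw [map_comm I c (θ ^ N) (ψ ^ N) (pow_comm c θ ψ h N), ← Ideal.map_pow]
  refine Ideal.map_mono ?_
  rw [Ideal.map_le_iff_le_comap]
  exact hN

/-- Let `φ` be a contracting endomorphism of a Noetherian local ring
`(R,m,k)` whose induced endomorphism of `k` is separable and such that `R/φ(m)R` is
Artinian.  Then there is a commutative square consisting of a weakly étale local map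
`β̃ : (R,m,k) → (S,mS,K)` with `S` complete and `k → K` separable, and a module-finite
contracting endomorphism `ψ : S → S` with `ψ ∘ β̃ = β̃ ∘ φ`. -/
theorem exists_cows_completion
    {R : Type u} [CommRing R] [IsNoetherianRing R] [IsLocalRing R]
    (φ : R →+* R) [IsLocalHom φ]
    (hcontr : ∃ N : ℕ, ∀ n : ℕ, N ≤ n → ∀ x ∈ maximalIdeal R,
      (φ ^ n) x ∈ (maximalIdeal R) ^ 2)
    (hsep : (ResidueField.map φ).IsSeparableFieldHom)
    (hart : IsArtinianRing (R ⧸ Ideal.map φ (maximalIdeal R))) :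
    Nonempty (CowsCompletion R φ) := by
  classical
  obtain ⟨N, hN⟩ := hcontr
  set m := maximalIdeal R with hm
  have hmφ : m.map φ ≤ m := ((local_hom_TFAE φ).out 0 2).mp ‹IsLocalHom φ›
  obtain ⟨e, he⟩ : ∃ e, m ^ e ≤ m.map φ :=
    exists_maximalIdeal_pow_le_of_isArtinianRing_quotient _
  -- the completion of `R`
  obtain ⟨A, _, c₀, hc₀, hflat₀⟩ := exists_isCompl' R m (IsNoetherian.noetherian m)
  have hflat₀ := hflat₀ inferInstance
  have hAc := hc₀.complete
  obtain ⟨π, hπ, hπker⟩ := hc₀.exists_residue (residue R) ker_residue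
  have hπs : Function.Surjective π := fun x => by
    obtain ⟨r, rfl⟩ := residue_surjective x
    exact ⟨c₀ r, hπ r⟩
  obtain ⟨φ', hφ'⟩ := hc₀.exists_end φ hmφ
  have hφ'm : (m.map c₀).map φ' ≤ m.map c₀ := by
    rw [map_comm m c₀ φ φ' hφ']
    exact Ideal.map_mono hmφ
  have hπφ : ∀ a, π (φ' a) = ResidueField.map φ (π a) := by
    intro a
    obtain ⟨r, hr⟩ := hc₀.dense 1 a
    rw [pow_one] at hr
    have h1 : π (a - c₀ r) = 0 := by rw [← RingHom.mem_ker, hπker]; exact hr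
    have h2 : π (φ' (a - c₀ r)) = 0 := by
      rw [← RingHom.mem_ker, hπker]; exact hφ'm (Ideal.mem_map_of_mem _ hr)
    rw [map_sub, sub_eq_zero] at h1
    rw [map_sub, map_sub, sub_eq_zero] at h2
    rw [h1, h2, hφ', hπ, hπ, ResidueField.map_residue]
  obtain ⟨s, hs, hφs⟩ := exists_coefficient_field (m.map c₀) π hπs hπker φ' (ResidueField.map φ)
    hsep.formallySmooth hπφ N e (contract_transfer m c₀ φ φ' hφ' N (hN N le_rfl))
    (pow_le_transfer m c₀ φ φ' hφ' e he)
  have hAn : IsNoetherianRing A := by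
    refine isNoetherianRing_of_complete (m.map c₀) (Ideal.FG.map (IsNoetherian.noetherian m) _) s ?_
    intro a
    refine ⟨π a, ?_⟩
    rw [← hπker, RingHom.mem_ker, map_sub, hs, sub_self]
  -- the residue field extension
  obtain ⟨K, _, ι, τ, hτ, hτι, hι⟩ := exists_perfection (ResidueField.map φ)
  have hML : MacLaneHom ι := macLane_perfection hsep.macLane ι τ hτι hι
  obtain ⟨T, _, jA, jK, ε, θ, hjA, hεK, hεA, hεker, hθA, hθK⟩ :=
    exists_baseChange ι s π hs φ' (ResidueField.map φ) τ hφs hτι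
  rw [hπker] at hεker
  have hIfg : ((m.map c₀).map jA).FG := Ideal.FG.map (Ideal.FG.map (IsNoetherian.noetherian m) _) _
  have hIθ : ((m.map c₀).map jA).map θ ≤ (m.map c₀).map jA := by
    rw [map_comm _ jA φ' θ hθA]
    exact Ideal.map_mono hφ'm
  obtain ⟨S, _, c, hc, -⟩ := exists_isCompl' T ((m.map c₀).map jA) hIfg
  obtain ⟨ε', hε', hε'ker⟩ := hc.exists_residue ε hεker
  obtain ⟨ψ, hψ⟩ := hc.exists_end θ hIθ
  obtain ⟨β, hβ⟩ : ∃ β : R →+* S, β = c.comp (jA.comp c₀) := ⟨_, rfl⟩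
  have hβa : ∀ r, β r = c (jA (c₀ r)) := fun r => by rw [hβ]; rfl
  have hn : ((m.map c₀).map jA).map c = m.map β := by
    rw [Ideal.map_map, Ideal.map_map, hβ, RingHom.comp_assoc]
  have hSc := hc.complete
  rw [hn] at hε'ker hSc
  have hε's : Function.Surjective ε' := fun x => ⟨c (jK x), by rw [hε', hεK]⟩
  have hmax : (m.map β).IsMaximal := by
    rw [← hε'ker]; exact RingHom.ker_isMaximal_of_surjective ε' hε's
  have hloc : IsLocalRing S := isLocalRing_of_isAdicComplete_maximal (m.map β)
  have hnmax : m.map β = maximalIdeal S := eq_maximalIdeal hmax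
  have hnfg : (m.map β).FG := Ideal.FG.map (IsNoetherian.noetherian m) _
  have hSn : IsNoetherianRing S := by
    refine isNoetherianRing_of_complete (m.map β) hnfg (c.comp jK) fun b => ⟨ε' b, ?_⟩
    rw [← hε'ker, RingHom.mem_ker, map_sub, RingHom.comp_apply, hε', hεK, sub_self]
  have hψβ : ∀ r, ψ (β r) = β (φ r) := fun r => by
    rw [hβa, hβa, hψ, hθA, hφ']
  have hβloc : IsLocalHom β := ((local_hom_TFAE β).out 0 2).mpr hnmax.le
  have hβflat : β.Flat := by
    have h1 : (c.comp jA).Flat := by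
      let _ : Algebra A T := jA.toAlgebra
      let _ : Algebra T S := c.toAlgebra
      let _ : Algebra A S := (c.comp jA).toAlgebra
      have : IsScalarTower A T S := .of_algebraMap_eq fun _ => rfl
      have : Module.Flat A T := hjA
      refine flat_of_isCompl' (T := T) (m.map c₀) hc ?_
      rw [← hnmax, ← hn, Ideal.map_map jA c]
      exact le_rfl
    rw [hβ, ← RingHom.comp_assoc]
    exact RingHom.Flat.comp hflat₀ h1
  refine ⟨{ S := S, β := β, ψ := ψ, weaklyEtale := ⟨hβflat, hβloc, hnmax⟩,
            complete := hnmax ▸ hSc, residueSeparable := ?_, square_comm := RingHom.ext hψβ,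
            moduleFinite := ?_, contracting := ⟨N, fun n hn' x hx => ?_⟩ }⟩
  · obtain ⟨g, hg⟩ : ∃ g : ResidueField S →+* K, ∀ x, g (residue S x) = ε' x :=
      ⟨Ideal.Quotient.lift (maximalIdeal S) ε' (fun a ha => by
        rwa [← hnmax, ← hε'ker, RingHom.mem_ker] at ha), fun x => rfl⟩
    have h1 : g.comp (ResidueField.map β) = ι := by
      ext x
      obtain ⟨r, rfl⟩ := residue_surjective x
      rw [RingHom.comp_apply, ResidueField.map_residue, hg, hβa, hε', hεA, hπ]
    rw [← h1] at hML
    exact hML.of_comp.isSeparableFieldHom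
  · have := hSc
    refine finite_of_complete (m.map β) (m.map β) ψ hnfg ?_ e
      (pow_le_transfer m β φ ψ hψβ e he) fun y => ?_
    · rw [map_comm m β φ ψ hψβ]
      exact Ideal.map_mono hmφ
    · obtain ⟨x, hx⟩ := hτ.2 (ε' y)
      refine ⟨c (jK x), ?_⟩
      rw [← hε'ker, RingHom.mem_ker, map_sub, hψ, hθK, hε', hεK, hx, sub_self]
  · rw [← hnmax] at hx ⊢
    exact contract_transfer m β φ ψ hψβ n (hN n hn') (Ideal.mem_map_of_mem _ hx)
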